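/- Let Q be a finite acyclic quiver, k a field, Λ a finite-dimensional k-algebra, and M a finite-dimensional left ΛQ-module. Then M lies in mono(Q,Λ) if and only if the restriction of M along the canonical algebra morphism kQ → ΛQ is a projective kQ-module. -/

import Mathlib

/-! Basic framework: representations of a quiver over a ring. -/

namespace QuivRep

/-- A representation of a quiver `V` over a ring `Λ`. -/
structure Repn (Λ : Type) [Ring Λ] (V : Type) [Quiver.{1} V] where
  M : V → Type
  [acg : ∀ i, AddCommGroup (M i)]
  [mod : ∀ i, Module Λ (M i)]
  h : ∀ {i j : V}, (i ⟶ j) → (M i →ₗ[Λ] M j)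

attribute [instance] Repn.acg Repn.mod

variable {Λ : Type} [Ring Λ] {V : Type} [Quiver.{1} V]

/-- A morphism of representations. -/
@[ext]
structure RepHom (X Y : Repn Λ V) where
  app : ∀ i, X.M i →ₗ[Λ] Y.M i
  comm : ∀ {i j : V} (a : i ⟶ j), (Y.h a).comp (app i) = (app j).comp (X.h a)

namespace RepHom

def id (X : Repn Λ V) : RepHom X X :=
  ⟨fun _ => LinearMap.id, fun _ => rfl⟩

def comp {X Y Z : Repn Λ V} (g : RepHom Y Z) (f : RepHom X Y) : RepHom X Z :=
  ⟨fun i => (g.app i).comp (f.app i), fun a => by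
    rw [← LinearMap.comp_assoc, g.comm a, LinearMap.comp_assoc, f.comm a,
      LinearMap.comp_assoc]⟩

instance (X Y : Repn Λ V) : Zero (RepHom X Y) :=
  ⟨⟨fun _ => 0, fun a => by simp⟩⟩

end RepHom

/-- Isomorphism of representations. -/
def RepIso (X Y : Repn Λ V) : Prop :=
  ∃ (f : RepHom X Y) (g : RepHom Y X), g.comp f = RepHom.id X ∧ f.comp g = RepHom.id Y

/-- The zero representation predicate. -/
def Repn.IsZero (X : Repn Λ V) : Prop := ∀ i, Subsingleton (X.M i)

/-- Indecomposability, via idempotent endomorphisms. -/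
def Repn.Indec (X : Repn Λ V) : Prop :=
  ¬ X.IsZero ∧ ∀ e : RepHom X X, e.comp e = e → e = RepHom.id X ∨ e = 0

/-- Finitely generated (pointwise) representations. -/
def Repn.FG (X : Repn Λ V) : Prop := ∀ i, Module.Finite Λ (X.M i)

variable [Fintype V] [∀ i j : V, Fintype (i ⟶ j)]

/-- The canonical map `⊕_{α : t(α) = i} M_{s(α)} → M_i` of a representation. -/
noncomputable def Repn.inMap (X : Repn Λ V) (i : V) :
    ((a : Σ j : V, j ⟶ i) → X.M a.1) →ₗ[Λ] X.M i :=
  ∑ a : (Σ j : V, j ⟶ i), (X.h a.2).comp (LinearMap.proj a)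

/-- The (separated) monomorphism condition. -/
def Repn.IsMonoRep (X : Repn Λ V) : Prop := ∀ i : V, Function.Injective (X.inMap i)

/-- A quiver is acyclic if it has no nontrivial cycles. -/
def IsAcyclic (V : Type) [Quiver.{1} V] : Prop :=
  ∀ (i : V) (p : Quiver.Path i i), p = Quiver.Path.nil

/-- `f, g` form a short exact sequence of representations (computed vertexwise). -/
def IsSES {X Y Z : Repn Λ V} (f : RepHom X Y) (g : RepHom Y Z) : Prop :=
  (∀ i, Function.Injective (f.app i)) ∧ (∀ i, Function.Surjective (g.app i)) ∧
    (∀ i, LinearMap.range (f.app i) = LinearMap.ker (g.app i))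

end QuivRep

namespace QuivRep

/-- Categorical projectivity of a representation of `Q` over `Λ`,
i.e. projectivity as a `ΛQ`-module. -/
def RepProjective {Λ : Type} [Ring Λ] {V : Type} [Quiver.{1} V] (P : Repn Λ V) : Prop :=
  ∀ (X Y : Repn Λ V) (g : RepHom X Y), (∀ i, Function.Surjective (g.app i)) →
    ∀ f : RepHom P Y, ∃ l : RepHom P X, g.comp l = f

/-- Restriction of a representation of `Q` over `Λ` along the canonical algebra morphism
`kQ → ΛQ`; concretely, each vertex module is viewed as a `k`-module via `algebraMap k Λ`
and each structure map as a `k`-linear map. -/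
noncomputable def restrictRep (k : Type) [CommRing k] {Λ : Type} [Ring Λ] [Algebra k Λ]
    {V : Type} [Quiver.{1} V] (X : Repn Λ V) : Repn k V :=
  Repn.mk (M := X.M) (acg := X.acg)
    (mod := fun i => Module.compHom (X.M i) (algebraMap k Λ))
    (h := fun {i j} a =>
      letI : Module k (X.M i) := Module.compHom (X.M i) (algebraMap k Λ)
      letI : Module k (X.M j) := Module.compHom (X.M j) (algebraMap k Λ)
      { toFun := X.h a
        map_add' := fun x y => map_add _ x y
        map_smul' := fun r x => (X.h a).map_smul (algebraMap k Λ r) x })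

end QuivRep

/-!
Over any ring, a projective representation has a split monomorphism `P.inMap i` at every vertex `i`:
a section of the cover of `P` with vertices `P.M i × ⊕_{t(α) = i} P.M (s(α))` and structure maps
`(p, _) ↦ (P.h α p, p in the summand α)` supplies the retractions.  Conversely, if every `P.inMap i`
has a retraction `r i`, then on an acyclic quiver `P` is free on the family `ker (r i)`: a morphism
out of `P` can be prescribed there arbitrarily, and is determined there, by recursion along the
arrows.  If each `P.M i` is projective this lifts morphisms through epimorphisms.  Over a
semisimple ring all monomorphisms split and all modules are projective, so the two conditions agree
with `P.IsMonoRep`, which does not depend on the base ring.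
-/

namespace QuivRep

theorem IsAcyclic.wellFounded {V : Type} [Quiver.{1} V] [Finite V] (hacyc : IsAcyclic V) :
    WellFounded fun j i : V => Nonempty (j ⟶ i) := by
  let r (j i : V) : Prop := ∃ p : Quiver.Path j i, 0 < p.length
  have : IsTrans V r := ⟨fun _ _ _ ⟨p, hp⟩ ⟨q, _⟩ => ⟨p.comp q, by rw [p.length_comp]; omega⟩⟩
  have : Std.Irrefl r := ⟨fun i ⟨p, hp⟩ => by simp [hacyc i p] at hp⟩
  exact Subrelation.wf (fun ⟨a⟩ => ⟨a.toPath, Nat.one_pos⟩)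
    (Finite.wellFounded_of_trans_of_irrefl r)

section

variable {R : Type} [Ring R] {V : Type} [Quiver.{1} V]

/-- The source `⊕_{α : t(α) = i} X_{s(α)}` of the canonical map into the vertex `i`.  It is encoded
as a product, so it is the direct sum only when finitely many arrows end at `i`. -/
abbrev Repn.InSource (X : Repn R V) (i : V) : Type 1 :=
  (a : Σ j : V, j ⟶ i) → X.M a.1

theorem RepHom.app_h {X Y : Repn R V} (f : RepHom X Y) {i j : V} (a : i ⟶ j) (x : X.M i) :
    f.app j (X.h a x) = Y.h a (f.app i x) :=
  (LinearMap.congr_fun (f.comm a) x).symm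

section InCover

variable [∀ i j : V, Small.{0} (i ⟶ j)]

open Classical in
/-- The cover of `P` whose splitting splits all maps `P.inMap i`: its module at `i` is
`P.M i × P.InSource i`, and an arrow sends `(p, _)` to its image `P.h a p` together with `p` itself,
placed in the summand of that arrow.  `Shrink` brings `P.InSource i` down to `Type`; the arrows of
the quiver live in `Type 1`. -/
noncomputable def Repn.inCover (P : Repn R V) : Repn R V where
  M i := P.M i × Shrink.{0} (P.InSource i)
  h {j i} a := LinearMap.prod (P.h a)
    ((Shrink.linearEquiv R (P.InSource i)).symm.toLinearMap ∘ₗ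
      LinearMap.single R (fun b : Σ j : V, j ⟶ i => P.M b.1) ⟨j, a⟩) ∘ₗ
    LinearMap.fst R _ _

/-- The projection of the cover `P.inCover` onto `P`. -/
noncomputable def Repn.inCoverFst (P : Repn R V) : RepHom P.inCover P where
  app i := LinearMap.fst R (P.M i) (Shrink.{0} (P.InSource i))
  comm _ := rfl

/-- The projection of `P.inCover`, at a vertex `i`, onto `P.InSource i`.  It is not part of a
morphism of representations. -/
noncomputable def Repn.inCoverSnd (P : Repn R V) (i : V) : P.inCover.M i →ₗ[R] P.InSource i :=
  (Shrink.linearEquiv R (P.InSource i)).toLinearMap ∘ₗ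
    LinearMap.snd R (P.M i) (Shrink.{0} (P.InSource i))

open Classical in
theorem Repn.inCoverSnd_h (P : Repn R V) {i : V} (a : Σ j : V, j ⟶ i) (y : P.inCover.M a.1) :
    P.inCoverSnd i (P.inCover.h a.2 y) = Pi.single a (P.inCoverFst.app a.1 y) :=
  (Shrink.linearEquiv R (P.InSource i)).apply_symm_apply _

end InCover

variable [Fintype V] [∀ i j : V, Fintype (i ⟶ j)]

theorem Repn.inMap_apply (X : Repn R V) (i : V) (x : X.InSource i) :
    X.inMap i x = ∑ a, X.h a.2 (x a) := by
  simp [Repn.inMap]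

open Classical in
theorem Repn.inMap_single (X : Repn R V) {i j : V} (a : j ⟶ i) (x : X.M j) :
    X.inMap i (Pi.single (M := fun b : Σ j : V, j ⟶ i => X.M b.1) ⟨j, a⟩ x) = X.h a x := by
  rw [inMap_apply, Finset.sum_eq_single ⟨j, a⟩]
  · rw [Pi.single_eq_same]
  · intro b _ hb
    rw [Pi.single_eq_of_ne hb, map_zero]
  · simp

theorem RepHom.app_inMap {X Y : Repn R V} (f : RepHom X Y) (i : V) (x : X.InSource i) :
    f.app i (X.inMap i x) = Y.inMap i fun a => f.app a.1 (x a) := by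
  simp only [Repn.inMap_apply, map_sum, f.app_h]

/-- The morphism of representations given by a family of linear maps that is compatible with the
canonical maps into all vertices. -/
def RepHom.ofInMap {X Y : Repn R V} (l : ∀ i, X.M i →ₗ[R] Y.M i)
    (hl : ∀ i x, l i (X.inMap i x) = Y.inMap i fun a => l a.1 (x a)) : RepHom X Y where
  app := l
  comm {j i} a := by
    classical
    ext x
    have hsingle : (fun b : Σ j : V, j ⟶ i =>
        l b.1 (Pi.single (M := fun b : Σ j : V, j ⟶ i => X.M b.1) ⟨j, a⟩ x b)) =
          Pi.single ⟨j, a⟩ (l j x) :=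
      funext fun b => Pi.apply_single (fun b => l b.1) (fun _ => map_zero _) ⟨j, a⟩ x b
    calc Y.h a (l j x)
      _ = Y.inMap i (Pi.single ⟨j, a⟩ (l j x)) := (Y.inMap_single a _).symm
      _ = l i (X.inMap i (Pi.single ⟨j, a⟩ x)) := by rw [hl, hsingle]
      _ = l i (X.h a x) := by rw [X.inMap_single]

section Retraction

variable {P : Repn R V} {r : ∀ i, P.M i →ₗ[R] P.InSource i}

theorem RepHom.exists_eqOn_ker_retraction (hacyc : IsAcyclic V)
    (hr : ∀ i, Function.LeftInverse (r i) (P.inMap i)) {A : Repn R V}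
    (t : ∀ i, P.M i →ₗ[R] A.M i) :
    ∃ l : RepHom P A, ∀ i x, r i x = 0 → l.app i x = t i x := by
  have wf := hacyc.wellFounded
  let step (i : V) (l : ∀ j, Nonempty (j ⟶ i) → (P.M j →ₗ[R] A.M j)) : P.M i →ₗ[R] A.M i :=
    A.inMap i ∘ₗ LinearMap.piMap (fun a => l a.1 ⟨a.2⟩) ∘ₗ r i
      + t i ∘ₗ (LinearMap.id - P.inMap i ∘ₗ r i)
  let l : ∀ i, P.M i →ₗ[R] A.M i := wf.fix step
  have l_apply (i x) : l i x =
      A.inMap i (fun a => l a.1 (r i x a)) + t i (x - P.inMap i (r i x)) :=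
    LinearMap.congr_fun (wf.fix_eq step i) x
  have l_inMap (i x) : l i (P.inMap i x) = A.inMap i fun a => l a.1 (x a) := by
    rw [l_apply, hr i, sub_self, map_zero, add_zero]
  refine ⟨RepHom.ofInMap l l_inMap, fun i x hx => (l_apply i x).trans ?_⟩
  have hzero : (fun a => l a.1 (r i x a)) = 0 := by
    funext a
    rw [hx, Pi.zero_apply, map_zero, Pi.zero_apply]
  rw [hzero, hx, map_zero, map_zero, zero_add, sub_zero]

theorem RepHom.ext_of_eqOn_ker_retraction (hacyc : IsAcyclic V)
    (hr : ∀ i, Function.LeftInverse (r i) (P.inMap i)) {B : Repn R V} {f g : RepHom P B}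
    (hfg : ∀ i x, r i x = 0 → f.app i x = g.app i x) : f = g := by
  refine RepHom.ext (funext fun i => ?_)
  induction i using hacyc.wellFounded.induction with
  | _ i ih =>
    ext x
    have hker : r i (x - P.inMap i (r i x)) = 0 := by rw [map_sub, hr i, sub_self]
    have hrange : f.app i (P.inMap i (r i x)) = g.app i (P.inMap i (r i x)) := by
      simp only [RepHom.app_inMap, fun a : Σ j : V, j ⟶ i => ih a.1 ⟨a.2⟩]
    rw [← sub_add_cancel x (P.inMap i (r i x)), map_add, map_add, hfg i _ hker, hrange]

theorem RepProjective.of_leftInverse_inMap (hacyc : IsAcyclic V)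
    (hproj : ∀ i, Module.Projective R (P.M i))
    (hr : ∀ i, Function.LeftInverse (r i) (P.inMap i)) : RepProjective P := by
  intro A B g hg f
  choose t ht using fun i => Module.projective_lifting_property (g.app i) (f.app i) (hg i)
  obtain ⟨l, hl⟩ := RepHom.exists_eqOn_ker_retraction hacyc hr t
  refine ⟨l, RepHom.ext_of_eqOn_ker_retraction hacyc hr fun i x hx => ?_⟩
  calc g.app i (l.app i x)
    _ = g.app i (t i x) := by rw [hl i x hx]
    _ = f.app i x := LinearMap.congr_fun (ht i) x

end Retraction

theorem Repn.inCoverSnd_inMap (P : Repn R V) (i : V) (y : P.inCover.InSource i) :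
    P.inCoverSnd i (P.inCover.inMap i y) = fun a => P.inCoverFst.app a.1 (y a) := by
  classical
  simp only [inMap_apply, map_sum, inCoverSnd_h]
  exact Finset.univ_sum_single _

theorem RepProjective.exists_leftInverse_inMap {P : Repn R V} (hP : RepProjective P) (i : V) :
    ∃ r : P.M i →ₗ[R] P.InSource i, Function.LeftInverse r (P.inMap i) := by
  obtain ⟨s, hs⟩ := hP P.inCover P P.inCoverFst (fun _ => Prod.fst_surjective) (RepHom.id P)
  have fst_s (j) (p : P.M j) : P.inCoverFst.app j (s.app j p) = p :=
    congrArg (fun f : RepHom P P => f.app j p) hs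
  refine ⟨P.inCoverSnd i ∘ₗ s.app i, fun x => ?_⟩
  calc P.inCoverSnd i (s.app i (P.inMap i x))
    _ = P.inCoverSnd i (P.inCover.inMap i fun a => s.app a.1 (x a)) := by rw [s.app_inMap]
    _ = fun a => P.inCoverFst.app a.1 (s.app a.1 (x a)) := P.inCoverSnd_inMap i _
    _ = x := funext fun a => fst_s a.1 (x a)

theorem Repn.IsMonoRep.exists_leftInverse_inMap [IsSemisimpleRing R] {P : Repn R V}
    (hP : P.IsMonoRep) (i : V) :
    ∃ r : P.M i →ₗ[R] P.InSource i, Function.LeftInverse r (P.inMap i) := by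
  obtain ⟨r, hr⟩ := IsSemisimpleModule.extension_property (P.inMap i) (hP i) LinearMap.id
  exact ⟨r, LinearMap.congr_fun hr⟩

theorem isMonoRep_iff_repProjective [IsSemisimpleRing R] (hacyc : IsAcyclic V) (P : Repn R V) :
    P.IsMonoRep ↔ RepProjective P := by
  constructor
  · intro hP
    choose r hr using hP.exists_leftInverse_inMap
    exact .of_leftInverse_inMap hacyc (fun _ => Module.projective_of_isSemisimpleRing R _) hr
  · intro hP i
    obtain ⟨r, hr⟩ := hP.exists_leftInverse_inMap i
    exact hr.injective

end

section Restriction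

variable (k : Type) [CommRing k] {Λ : Type} [Ring Λ] [Algebra k Λ] {V : Type} [Quiver.{1} V]
  [Fintype V] [∀ i j : V, Fintype (i ⟶ j)]

theorem coe_inMap_restrictRep (X : Repn Λ V) (i : V) :
    ⇑((restrictRep k X).inMap i) = X.inMap i :=
  funext fun x => ((restrictRep k X).inMap_apply i x).trans (X.inMap_apply i x).symm

theorem isMonoRep_restrictRep_iff (X : Repn Λ V) : (restrictRep k X).IsMonoRep ↔ X.IsMonoRep :=
  forall_congr' fun i => iff_of_eq (congrArg Function.Injective (coe_inMap_restrictRep k X i))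

end Restriction

end QuivRep

open QuivRep in
theorem mono_iff_restriction_projective_general
    (V : Type) [Quiver.{1} V] [Fintype V] [∀ i j : V, Fintype (i ⟶ j)]
    (hacyc : IsAcyclic V)
    (k : Type) [CommRing k] [IsSemisimpleRing k] (Λ : Type) [Ring Λ] [Algebra k Λ]
    (X : Repn Λ V) :
    X.IsMonoRep ↔ RepProjective (restrictRep k X) :=
  (isMonoRep_restrictRep_iff k X).symm.trans (isMonoRep_iff_repProjective hacyc _)

open QuivRep in
/-- Let `Q` be a finite acyclic quiver, `k` a field, `Λ` a
finite-dimensional `k`-algebra and `M` a finite-dimensional left `ΛQ`-module.  Then `M`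
lies in `mono(Q,Λ)` if and only if the restriction of `M` along the canonical algebra
morphism `kQ → ΛQ` is a projective `kQ`-module. -/
theorem mono_iff_restriction_projective
    (V : Type) [Quiver.{1} V] [Fintype V] [∀ i j : V, Fintype (i ⟶ j)]
    (hacyc : IsAcyclic V)
    (k : Type) [Field k] (Λ : Type) [Ring Λ] [Algebra k Λ] [Module.Finite k Λ]
    (X : Repn Λ V) (hX : X.FG) :
    X.IsMonoRep ↔ RepProjective (restrictRep k X) := by
  exact mono_iff_restriction_projective_general V hacyc k Λ X
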